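/- arXiv:2603.27802 — 6 statements merged into one kernel-verified Lean document; each statement's English description precedes it below -/
import Mathlib

section
/- Let c > 0, g ∈ ℂ, and let b : (-∞,0] → ℂ be continuous such that y ↦ e^{c y} b(y) is integrable on (-∞,0]. Suppose u : (-∞,0] → ℂ is twice continuously differentiable and satisfies u''(y) - c² u(y) = b(y) for all y ≤ 0, u(0) = g, u(y) → 0 as y → -∞, and u' is bounded on (-∞,0]. Then u'(0) = c·g + ∫_{-∞}^{0} e^{c y} b(y) dy. -/
open MeasureTheory Filter Set

/-- Single Fourier-mode Dirichlet-to-Neumann formula for the Poisson problem on the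
half-line `(-∞,0]`: if `u'' - c² u = b`, `u(0) = g`, `u → 0` at `-∞` and `u'` bounded,
then `u'(0) = c g + ∫_{-∞}^0 e^{c y} b(y) dy`. -/
theorem dirichlet_to_neumann_mode
    (c : ℝ) (hc : 0 < c) (g : ℂ) (b u u' u'' : ℝ → ℂ)
    (hb_cont : ContinuousOn b (Iic 0))
    (hb_int : IntegrableOn (fun y => (Real.exp (c * y) : ℂ) * b y) (Iic 0))
    (hderiv1 : ∀ y ∈ Iic (0 : ℝ), HasDerivWithinAt u (u' y) (Iic 0) y)
    (hderiv2 : ∀ y ∈ Iic (0 : ℝ), HasDerivWithinAt u' (u'' y) (Iic 0) y)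
    (hcont2 : ContinuousOn u'' (Iic 0))
    (hODE : ∀ y ∈ Iic (0 : ℝ), u'' y - (c : ℂ) ^ 2 * u y = b y)
    (hbc : u 0 = g)
    (hdecay : Tendsto u atBot (nhds 0))
    (hbound : ∃ M, ∀ y ∈ Iic (0 : ℝ), ‖u' y‖ ≤ M) :
    u' 0 = (c : ℂ) * g + ∫ y in Iic (0 : ℝ), (Real.exp (c * y) : ℂ) * b y := by
  obtain ⟨M, hM⟩ := hbound
  have hexp : ∀ y : ℝ, HasDerivAt (fun y : ℝ => (Real.exp (c * y) : ℂ))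
      ((Real.exp (c * y) * c : ℝ) : ℂ) y := by
    intro y
    have h : HasDerivAt (fun y : ℝ => Real.exp (c * y)) (Real.exp (c * y) * c) y := by
      simpa using ((hasDerivAt_id y).const_mul c).exp
    exact h.ofReal_comp
  have hF : ∀ y ∈ Iic (0 : ℝ), HasDerivWithinAt
      (fun y : ℝ => (Real.exp (c * y) : ℂ) * (u' y - (c : ℂ) * u y))
      ((Real.exp (c * y) : ℂ) * b y) (Iic 0) y := by
    intro y hy
    have h := (hexp y).hasDerivWithinAt (s := Iic 0) |>.mul
      ((hderiv2 y hy).sub ((hderiv1 y hy).const_mul (c : ℂ)))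
    refine h.congr_deriv ?_
    rw [← hODE y hy]
    simp only [Pi.sub_apply]
    push_cast
    ring
  have hlim0 : Tendsto (fun y : ℝ => Real.exp (c * y)) atBot (nhds 0) :=
    Real.tendsto_exp_atBot.comp (tendsto_id.const_mul_atBot hc)
  have hlim1 : Tendsto (fun y : ℝ => (Real.exp (c * y) : ℂ)) atBot (nhds 0) := by
    have := (Complex.continuous_ofReal.tendsto 0).comp hlim0
    simpa [Function.comp_def] using this
  have hlim2 : Tendsto (fun y : ℝ => (Real.exp (c * y) : ℂ) * u' y) atBot (nhds 0) := by
    refine squeeze_zero_norm' (a := fun y => Real.exp (c * y) * M) ?_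
      (by simpa using hlim0.mul_const M)
    filter_upwards [eventually_le_atBot (0 : ℝ)] with y hy
    rw [norm_mul, Complex.norm_real, Real.norm_of_nonneg (Real.exp_pos _).le]
    exact mul_le_mul_of_nonneg_left (hM y hy) (Real.exp_pos _).le
  have hlim : Tendsto (fun y : ℝ => (Real.exp (c * y) : ℂ) * (u' y - (c : ℂ) * u y))
      atBot (nhds 0) := by
    have h := hlim2.sub (hlim1.mul (hdecay.const_mul (c : ℂ)))
    simp only [mul_zero, sub_zero] at h
    exact h.congr (fun y => by ring)
  have key := integral_Iic_of_hasDerivAt_of_tendsto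
    (hF 0 self_mem_Iic).continuousWithinAt
    (fun x hx => (hF x (Iio_subset_Iic_self hx)).hasDerivAt (Iic_mem_nhds hx)) hb_int hlim
  rw [key, hbc]
  simp
end

section
/- Let c > 0, g ∈ ℂ, and let b : (-∞,0] → ℂ be continuous and integrable on (-∞,0]. Define u(y) := (g + (1/(2c)) ∫_{-∞}^{0} e^{c s} b(s) ds)·e^{c y} - (1/(2c)) ∫_{-∞}^{0} e^{-c|y-s|} b(s) ds for y ≤ 0. Then u is twice continuously differentiable on (-∞,0], satisfies u''(y) - c² u(y) = b(y) for all y ≤ 0, u(0) = g, u(y) → 0 as y → -∞, u' is bounded on (-∞,0], and u'(0) = c·g + ∫_{-∞}^{0} e^{c s} b(s) ds. -/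
open MeasureTheory Filter Set

/-- Existence (variation of constants) for the single-mode problem `u'' - c² u = b`
on `(-∞,0]` with Dirichlet datum `g` and decay at `-∞`, together with the
Dirichlet-to-Neumann formula `u'(0) = c g + ∫_{-∞}^0 e^{c s} b(s) ds`. -/
theorem variation_of_constants_mode
    (c : ℝ) (hc : 0 < c) (g : ℂ) (b : ℝ → ℂ)
    (hb_cont : ContinuousOn b (Iic 0))
    (hb_int : IntegrableOn b (Iic 0))
    (u : ℝ → ℂ)
    (hu : ∀ y ≤ (0 : ℝ), u y =
      (g + ((1 / (2 * c) : ℝ) : ℂ) * ∫ s in Iic (0 : ℝ), (Real.exp (c * s) : ℂ) * b s) *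
          Complex.exp ((c : ℂ) * y)
        - ((1 / (2 * c) : ℝ) : ℂ) *
            ∫ s in Iic (0 : ℝ), (Real.exp (-(c * |y - s|)) : ℂ) * b s) :
    ∃ u' u'' : ℝ → ℂ,
      (∀ y ∈ Iic (0 : ℝ), HasDerivWithinAt u (u' y) (Iic 0) y) ∧
      (∀ y ∈ Iic (0 : ℝ), HasDerivWithinAt u' (u'' y) (Iic 0) y) ∧
      ContinuousOn u'' (Iic 0) ∧
      (∀ y ∈ Iic (0 : ℝ), u'' y - (c : ℂ) ^ 2 * u y = b y) ∧
      u 0 = g ∧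
      Tendsto u atBot (nhds 0) ∧
      (∃ M, ∀ y ∈ Iic (0 : ℝ), ‖u' y‖ ≤ M) ∧
      u' 0 = (c : ℂ) * g + ∫ s in Iic (0 : ℝ), (Real.exp (c * s) : ℂ) * b s := by
  set J : ℂ := ∫ s in Iic (0 : ℝ), (Real.exp (c * s) : ℂ) * b s with hJ
  have hcC : (c : ℂ) ≠ 0 := by exact_mod_cast hc.ne'
  obtain ⟨B, hB⟩ : ∃ B : ℝ → ℂ, B = fun s => b (min s 0) := ⟨_, rfl⟩
  have hBc : Continuous B := by
    rw [hB]
    exact hb_cont.comp_continuous (by fun_prop) (fun s => min_le_right s 0)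
  have hBb : ∀ s ≤ (0 : ℝ), B s = b s := by
    intro s hs
    rw [hB]
    simp [min_eq_left hs]
  obtain ⟨E, hE⟩ : ∃ E : ℝ → ℂ, E = fun y => (Real.exp (c * y) : ℂ) := ⟨_, rfl⟩
  obtain ⟨F, hF⟩ : ∃ F : ℝ → ℂ, F = fun y => (Real.exp (-(c * y)) : ℂ) := ⟨_, rfl⟩
  have hEc : Continuous E := by rw [hE]; fun_prop
  have hFc : Continuous F := by rw [hF]; fun_prop
  have hEF : ∀ y, E y * F y = 1 := by
    intro y
    rw [hE, hF]
    simp only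
    rw [← Complex.ofReal_mul, ← Real.exp_add]
    simp
  have hE0 : E 0 = 1 := by simp [hE]
  have hF0 : F 0 = 1 := by simp [hF]
  have hEd : ∀ y, HasDerivAt E (c * E y) y := by
    intro y
    have h := (((hasDerivAt_id y).const_mul c).exp).ofReal_comp
    rw [hE]
    refine HasDerivAt.congr_deriv h ?_
    simp [mul_comm]
  have hFd : ∀ y, HasDerivAt F (-c * F y) y := by
    intro y
    have h := ((((hasDerivAt_id y).const_mul c).neg).exp).ofReal_comp
    rw [hF]
    refine HasDerivAt.congr_deriv h ?_
    simp [mul_comm]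
  obtain ⟨P, hP⟩ : ∃ P : ℝ → ℂ, P = fun y => J + ∫ s in (0 : ℝ)..y, E s * B s := ⟨_, rfl⟩
  obtain ⟨N, hN⟩ : ∃ N : ℝ → ℂ, N = fun y => -∫ s in (0 : ℝ)..y, F s * B s := ⟨_, rfl⟩
  have hP0 : P 0 = J := by simp [hP]
  have hN0 : N 0 = 0 := by simp [hN]
  have hPd : ∀ y, HasDerivAt P (E y * B y) y := by
    intro y
    rw [hP]
    exact ((hEc.mul hBc).integral_hasStrictDerivAt 0 y).hasDerivAt.const_add J
  have hNd : ∀ y, HasDerivAt N (-(F y * B y)) y := by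
    intro y
    rw [hN]
    exact ((hFc.mul hBc).integral_hasStrictDerivAt 0 y).hasDerivAt.neg
  -- kernels
  have hk : ∀ y, IntegrableOn (fun s => (Real.exp (-(c * |y - s|)) : ℂ) * b s) (Iic 0) := by
    intro y
    refine Integrable.mono hb_int ?_ ?_
    · exact (Continuous.aestronglyMeasurable (by fun_prop)).mul hb_int.aestronglyMeasurable
    · refine Eventually.of_forall fun s => ?_
      rw [norm_mul, Complex.norm_real, Real.norm_eq_abs, Real.abs_exp]
      refine mul_le_of_le_one_left (norm_nonneg _) (Real.exp_le_one_iff.2 ?_)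
      have := mul_nonneg hc.le (abs_nonneg (y - s))
      linarith
  have hJi : IntegrableOn (fun s => E s * b s) (Iic 0) := by
    refine (hk 0).congr_fun ?_ measurableSet_Iic
    intro s hs
    have hs' : s ≤ 0 := hs
    simp only [hE, zero_sub, abs_neg, abs_of_nonpos hs', mul_neg, neg_neg]
  have hPy : ∀ y ≤ (0 : ℝ), P y = ∫ s in Iic y, E s * b s := by
    intro y hy
    have h1 := intervalIntegral.integral_Iic_sub_Iic (hJi.mono_set (Iic_subset_Iic.2 hy)) hJi
    have h2 : ∫ s in y..(0 : ℝ), E s * b s = ∫ s in y..(0 : ℝ), E s * B s := by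
      refine intervalIntegral.integral_congr fun s hs => ?_
      rw [uIcc_of_le hy] at hs
      simp only [hBb s hs.2]
    have h3 : (∫ s in Iic (0 : ℝ), E s * b s) = J := by rw [hJ, hE]
    rw [h2, h3, intervalIntegral.integral_symm] at h1
    simp only [hP]
    linear_combination h1
  have hE1 : ∀ y ≤ (0 : ℝ), (∫ s in Iic y, (Real.exp (-(c * |y - s|)) : ℂ) * b s) = F y * P y := by
    intro y hy
    rw [hPy y hy, ← integral_const_mul]
    refine setIntegral_congr_fun measurableSet_Iic fun s hs => ?_
    have hs' : s ≤ y := hs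
    simp only [hE, hF]
    rw [abs_of_nonneg (by linarith), ← mul_assoc, ← Complex.ofReal_mul, ← Real.exp_add]
    congr 3
    ring
  have hE2 : ∀ y ≤ (0 : ℝ),
      (∫ s in Ioc y 0, (Real.exp (-(c * |y - s|)) : ℂ) * b s) = E y * N y := by
    intro y hy
    simp only [hN]
    rw [← intervalIntegral.integral_symm, intervalIntegral.integral_of_le hy,
      ← integral_const_mul]
    refine setIntegral_congr_fun measurableSet_Ioc fun s hs => ?_
    simp only [hE, hF, hBb s hs.2]
    rw [abs_of_nonpos (by linarith [hs.1]), ← mul_assoc, ← Complex.ofReal_mul, ← Real.exp_add]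
    congr 3
    ring
  have hG : ∀ y ≤ (0 : ℝ),
      (∫ s in Iic (0 : ℝ), (Real.exp (-(c * |y - s|)) : ℂ) * b s) = F y * P y + E y * N y := by
    intro y hy
    rw [← hE1 y hy, ← hE2 y hy, ← setIntegral_union (Iic_disjoint_Ioc le_rfl) measurableSet_Ioc
      ((hk y).mono_set (Iic_subset_Iic.2 hy)) ((hk y).mono_set Ioc_subset_Iic_self),
      Iic_union_Ioc_eq_Iic hy]
  have hbd : ∀ (y : ℝ) (S : Set ℝ), MeasurableSet S → S ⊆ Iic 0 →
      ‖∫ s in S, (Real.exp (-(c * |y - s|)) : ℂ) * b s‖ ≤ ∫ s in Iic (0 : ℝ), ‖b s‖ := by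
    intro y S _ hS
    calc ‖∫ s in S, (Real.exp (-(c * |y - s|)) : ℂ) * b s‖ ≤ ∫ s in S, ‖b s‖ := by
          refine norm_integral_le_of_norm_le (hb_int.mono_set hS).norm ?_
          refine Eventually.of_forall fun s => ?_
          rw [norm_mul, Complex.norm_real, Real.norm_eq_abs, Real.abs_exp]
          refine mul_le_of_le_one_left (norm_nonneg _) (Real.exp_le_one_iff.2 ?_)
          have := mul_nonneg hc.le (abs_nonneg (y - s))
          linarith
      _ ≤ _ := setIntegral_mono_set hb_int.norm
          (Eventually.of_forall fun s => norm_nonneg _) hS.eventuallyLE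
  set A : ℂ := g + ((1 / (2 * c) : ℝ) : ℂ) * J with hA
  have hexp : ∀ y : ℝ, Complex.exp ((c : ℂ) * y) = E y := by
    intro y
    simp [hE]
  have hu2 : ∀ y ≤ (0 : ℝ), u y = A * E y - (1 / (2 * c)) * (F y * P y + E y * N y) := by
    intro y hy
    rw [hu y hy, hG y hy, hexp]
    push_cast
    ring
  have hud : ∀ y, HasDerivAt (fun y => A * E y - (1 / (2 * c)) * (F y * P y + E y * N y))
      (c * A * E y + (F y * P y - E y * N y) / 2) y := by
    intro y
    have h := ((hEd y).const_mul A).sub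
      ((((hFd y).mul (hPd y)).add ((hEd y).mul (hNd y))).const_mul (1 / (2 * (c : ℂ))))
    refine HasDerivAt.congr_deriv h ?_
    field_simp
    ring
  have hud2 : ∀ y, HasDerivAt (fun y => c * A * E y + (F y * P y - E y * N y) / 2)
      (c ^ 2 * (A * E y - (1 / (2 * c)) * (F y * P y + E y * N y)) + B y) y := by
    intro y
    have h := ((hEd y).const_mul (c * A)).add
      ((((hFd y).mul (hPd y)).sub ((hEd y).mul (hNd y))).div_const 2)
    refine HasDerivAt.congr_deriv h ?_
    field_simp
    linear_combination (2 * B y) * hEF y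
  refine ⟨fun y => c * A * E y + (F y * P y - E y * N y) / 2,
    fun y => c ^ 2 * (A * E y - (1 / (2 * c)) * (F y * P y + E y * N y)) + B y,
    ?_, ?_, ?_, ?_, ?_, ?_, ?_, ?_⟩
  · intro y hy
    exact (hud y).hasDerivWithinAt.congr (fun x hx => hu2 x hx) (hu2 y hy)
  · intro y hy
    exact (hud2 y).hasDerivWithinAt
  · have h : Continuous (fun y => A * E y - (1 / (2 * c)) * (F y * P y + E y * N y)) :=
      continuous_iff_continuousAt.2 fun y => (hud y).continuousAt
    exact ((continuous_const.mul h).add hBc).continuousOn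
  · intro y hy
    simp only [hu2 y hy, hBb y hy]
    ring
  · rw [hu2 0 le_rfl, hE0, hF0, hP0, hN0, hA]
    push_cast
    ring
  · have hlin : Tendsto (fun y : ℝ => c * y) atBot atBot := tendsto_id.const_mul_atBot hc
    have h1 : Tendsto E atBot (nhds 0) := by
      rw [hE]
      have := (Complex.continuous_ofReal.tendsto 0).comp (Real.tendsto_exp_atBot.comp hlin)
      simpa [Function.comp_def] using this
    have h2 : Tendsto (fun y : ℝ => ∫ s in Iic (0 : ℝ), (Real.exp (-(c * |y - s|)) : ℂ) * b s)
        atBot (nhds 0) := by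
      have h3 : Tendsto (fun y : ℝ => ∫ s in Iic (0 : ℝ), (Real.exp (-(c * |y - s|)) : ℂ) * b s)
          atBot (nhds (∫ s in Iic (0 : ℝ), (0 : ℂ))) := by
        refine tendsto_integral_filter_of_dominated_convergence (fun s => ‖b s‖)
          (Eventually.of_forall fun y => (hk y).aestronglyMeasurable) ?_ hb_int.norm ?_
        · refine Eventually.of_forall fun y => Eventually.of_forall fun s => ?_
          rw [norm_mul, Complex.norm_real, Real.norm_eq_abs, Real.abs_exp]
          refine mul_le_of_le_one_left (norm_nonneg _) (Real.exp_le_one_iff.2 ?_)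
          have := mul_nonneg hc.le (abs_nonneg (y - s))
          linarith
        · refine Eventually.of_forall fun s => ?_
          have h4 : Tendsto (fun y => F s * E y * b s) atBot (nhds 0) := by
            simpa using (h1.const_mul (F s)).mul_const (b s)
          refine h4.congr' ?_
          filter_upwards [eventually_le_atBot s] with y hy
          simp only [hE, hF]
          rw [abs_of_nonpos (by linarith), ← Complex.ofReal_mul, ← Real.exp_add]
          congr 3
          ring
      simpa using h3
    have h5 := (h1.const_mul A).sub (h2.const_mul ((1 / (2 * c) : ℝ) : ℂ))
    simp only [mul_zero, sub_zero] at h5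
    refine h5.congr' ?_
    filter_upwards [eventually_le_atBot (0 : ℝ)] with y hy
    rw [hu y hy, hexp]
  · refine ⟨‖(c : ℂ) * A‖ + ((∫ s in Iic (0 : ℝ), ‖b s‖) + ∫ s in Iic (0 : ℝ), ‖b s‖) / 2, ?_⟩
    intro y hy
    have hy' : y ≤ 0 := hy
    have h1 := hbd y (Iic y) measurableSet_Iic (Iic_subset_Iic.2 hy')
    have h2 := hbd y (Ioc y 0) measurableSet_Ioc Ioc_subset_Iic_self
    rw [hE1 y hy'] at h1
    rw [hE2 y hy'] at h2
    have h3 : ‖E y‖ ≤ 1 := by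
      simp only [hE]
      rw [Complex.norm_real, Real.norm_eq_abs, Real.abs_exp]
      exact Real.exp_le_one_iff.2 (mul_nonpos_of_nonneg_of_nonpos hc.le hy')
    refine (norm_add_le _ _).trans (add_le_add ?_ ?_)
    · rw [norm_mul]
      exact mul_le_of_le_one_right (norm_nonneg _) h3
    · rw [norm_div]
      have h4 := norm_sub_le (F y * P y) (E y * N y)
      simp only [Complex.norm_ofNat]
      linarith
  · simp only [hE0, hF0, hP0, hN0, hA]
    push_cast
    field_simp
    ring
end

section
/- Let c : ℤ → ℂ be finitely supported with c(0) = 0, and define h : ℤ → ℂ by h(k) := -i·sgn(k)·c(k), where sgn(0) = 0 and sgn(k) = k/|k| for k ≠ 0. Then for every k ∈ ℤ, -i·sgn(k)·Σ_{m∈ℤ} c(k-m)·h(m) = (1/2)·Σ_{m∈ℤ} ( h(k-m)·h(m) - c(k-m)·c(m) ). -/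
/-- Tricomi identity `𝓗(f·𝓗f) = ((𝓗f)² - f²)/2` at the level of Fourier coefficients:
`c` is the coefficient sequence of a mean-zero trigonometric polynomial, `h` that of its
Hilbert transform (symbol `-i sgn(k)`), and products become convolutions. -/
theorem tricomi_identity_coefficients
    (c h : ℤ → ℂ)
    (hc : (Function.support c).Finite)
    (hc0 : c 0 = 0)
    (hh : ∀ k : ℤ, h k = -Complex.I * ((Int.sign k : ℤ) : ℂ) * c k) :
    ∀ k : ℤ,
      -Complex.I * ((Int.sign k : ℤ) : ℂ) * ∑' m : ℤ, c (k - m) * h m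
        = (1 / 2 : ℂ) * ∑' m : ℤ, (h (k - m) * h m - c (k - m) * c m) := by
  intro k
  have key : ∀ m n : ℤ, m ≠ 0 → n ≠ 0 →
      Int.sign (n + m) * (Int.sign m + Int.sign n) = 1 + Int.sign n * Int.sign m := by
    intro m n hm hn
    rcases lt_or_gt_of_ne hm with h1 | h1 <;> rcases lt_or_gt_of_ne hn with h2 | h2
    · rw [Int.sign_eq_neg_one_of_neg h1, Int.sign_eq_neg_one_of_neg h2,
        Int.sign_eq_neg_one_of_neg (by omega)]; norm_num
    · rw [Int.sign_eq_neg_one_of_neg h1, Int.sign_eq_one_of_pos h2]; norm_num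
    · rw [Int.sign_eq_one_of_pos h1, Int.sign_eq_neg_one_of_neg h2]; norm_num
    · rw [Int.sign_eq_one_of_pos h1, Int.sign_eq_one_of_pos h2,
        Int.sign_eq_one_of_pos (by omega)]; norm_num
  have hs1 : Summable (fun m : ℤ => c (k - m) * h m) := by
    apply summable_of_hasFiniteSupport
    refine hc.subset fun m hm hcm => hm ?_
    simp [hh, hcm]
  have hs2 : Summable (fun m : ℤ => h (k - m) * c m) := by
    apply summable_of_hasFiniteSupport
    refine hc.subset fun m hm hcm => hm ?_
    simp [hcm]
  have hsw : ∑' m : ℤ, c (k - m) * h m = ∑' m : ℤ, h (k - m) * c m := by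
    rw [← (Equiv.subLeft k).tsum_eq (fun m : ℤ => c (k - m) * h m)]
    refine tsum_congr fun m => ?_
    simp [mul_comm]
  have hsum : ∑' m : ℤ, (h (k - m) * h m - c (k - m) * c m)
      = -Complex.I * ((Int.sign k : ℤ) : ℂ) *
        (∑' m : ℤ, c (k - m) * h m + ∑' m : ℤ, h (k - m) * c m) := by
    rw [← hs1.tsum_add hs2, ← tsum_mul_left]
    refine tsum_congr fun m => ?_
    by_cases hm : m = 0
    · subst hm; simp [hh, hc0]
    by_cases hn : k - m = 0
    · simp [hh, hn, hc0]
    have e := key m (k - m) hm hn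
    rw [sub_add_cancel] at e
    have e' : ((Int.sign k : ℤ) : ℂ) * ((Int.sign m : ℤ) + (Int.sign (k - m) : ℤ))
        = 1 + (Int.sign (k - m) : ℤ) * (Int.sign m : ℤ) := by exact_mod_cast e
    rw [hh m, hh (k - m)]
    linear_combination (c (k - m) * c m) * e' + (c (k - m) * c m) *
      (((Int.sign (k - m) : ℤ) : ℂ) * (Int.sign m : ℤ) -
        ((Int.sign k : ℤ) : ℂ) * ((Int.sign m : ℤ) + (Int.sign (k - m) : ℤ))) * Complex.I_sq
  rw [hsum, ← hsw]
  ring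
end

section
/- Let C₀ > 0, C₁ ≥ 0, C₂ ≥ 0 and T > 0 satisfy T·(4·C₁·C₀ + 8·C₂·C₀²) < 1. Let Z : [0,T] → ℝ be continuous with Z(t) ≥ 0 and Z(t) ≤ C₀ + C₁·t·Z(t)² + C₂·t·Z(t)³ for all t ∈ [0,T]. Then Z(t) ≤ 2·C₀ for all t ∈ [0,T]. -/
/-- Continuity/bootstrap argument for the cubic polynomial inequality
`Z(t) ≤ C₀ + C₁ t Z(t)² + C₂ t Z(t)³`: if `T(4C₁C₀ + 8C₂C₀²) < 1` then `Z ≤ 2C₀` on `[0,T]`. -/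
theorem cubic_bootstrap
    (C₀ C₁ C₂ T : ℝ) (hC₀ : 0 < C₀) (hC₁ : 0 ≤ C₁) (hC₂ : 0 ≤ C₂) (hT : 0 < T)
    (hsmall : T * (4 * C₁ * C₀ + 8 * C₂ * C₀ ^ 2) < 1)
    (Z : ℝ → ℝ)
    (hcont : ContinuousOn Z (Set.Icc 0 T))
    (hpos : ∀ t ∈ Set.Icc (0 : ℝ) T, 0 ≤ Z t)
    (hineq : ∀ t ∈ Set.Icc (0 : ℝ) T, Z t ≤ C₀ + C₁ * t * Z t ^ 2 + C₂ * t * Z t ^ 3) :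
    ∀ t ∈ Set.Icc (0 : ℝ) T, Z t ≤ 2 * C₀ := by
  intro t ht
  by_contra hlt
  have hlt' : 2 * C₀ < Z t := not_le.mp hlt
  have h0 : Z 0 ≤ C₀ := by
    have h := hineq 0 ⟨le_refl 0, hT.le⟩
    simpa using h
  have hsub : Set.Icc 0 t ⊆ Set.Icc 0 T := Set.Icc_subset_Icc_right ht.2
  obtain ⟨s, hs, hZ⟩ := intermediate_value_Icc ht.1 (hcont.mono hsub)
    (show 2 * C₀ ∈ Set.Icc (Z 0) (Z t) from ⟨by linarith, hlt'.le⟩)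
  have h := hineq s (hsub hs)
  rw [hZ] at h
  have hK : 0 ≤ 4 * C₁ * C₀ + 8 * C₂ * C₀ ^ 2 := by positivity
  have h1 : s * (4 * C₁ * C₀ + 8 * C₂ * C₀ ^ 2) < 1 :=
    lt_of_le_of_lt (mul_le_mul_of_nonneg_right (hsub hs).2 hK) hsmall
  have h2 := mul_lt_mul_of_pos_left h1 hC₀
  nlinarith [h, h2]
end

section
/- Let κ > 0 and C ≥ 0. Let E : [0,∞) → ℝ be differentiable with E(t) ≥ 0 for all t, and let D : [0,∞) → ℝ satisfy D(t) ≥ 0 for all t. Assume E'(t) + κ·D(t) ≤ C·√(E(t))·D(t) for all t ≥ 0 and C·√(E(0)) ≤ κ/2. Then E is nonincreasing on [0,∞); moreover E'(t) + (κ/2)·D(t) ≤ 0 and E(t) ≤ E(0) for all t ≥ 0. -/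
/-- Small-data absorption: if `E' + κ D ≤ C √E · D` with `D ≥ 0` and `C √(E 0) ≤ κ/2`,
then `E` is nonincreasing, `E' + (κ/2) D ≤ 0`, and `E(t) ≤ E(0)` for all `t ≥ 0`. -/
theorem small_data_absorption
    (κ C : ℝ) (hκ : 0 < κ) (hC : 0 ≤ C)
    (E E' D : ℝ → ℝ)
    (hderiv : ∀ t ∈ Set.Ici (0 : ℝ), HasDerivWithinAt E (E' t) (Set.Ici 0) t)
    (hEpos : ∀ t ∈ Set.Ici (0 : ℝ), 0 ≤ E t)
    (hDpos : ∀ t ∈ Set.Ici (0 : ℝ), 0 ≤ D t)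
    (hineq : ∀ t ∈ Set.Ici (0 : ℝ), E' t + κ * D t ≤ C * Real.sqrt (E t) * D t)
    (hsmall : C * Real.sqrt (E 0) ≤ κ / 2) :
    AntitoneOn E (Set.Ici 0) ∧
    (∀ t ∈ Set.Ici (0 : ℝ), E' t + (κ / 2) * D t ≤ 0) ∧
    (∀ t ∈ Set.Ici (0 : ℝ), E t ≤ E 0) := by
  have hcont : ContinuousOn E (Set.Ici 0) := fun t ht => (hderiv t ht).continuousWithinAt
  have key : ∀ t ∈ Set.Ici (0 : ℝ), ∀ η : ℝ, 0 < η → C * Real.sqrt (E 0 + η) ≤ κ →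
      E t ≤ E 0 + η := by
    intro t ht η hη hCη
    have ht0 : 0 ≤ t := ht
    have ht1 : 0 < t + 1 := by linarith
    have hs : 0 < η / (t + 1) := div_pos hη ht1
    have hst : η / (t + 1) * (t + 1) = η := by field_simp
    have hB : ∀ x : ℝ, HasDerivAt (fun x => E 0 + η / (t + 1) * x) (η / (t + 1)) x := by
      intro x
      simpa using ((hasDerivAt_id x).const_mul (η / (t + 1))).const_add (E 0)
    have h := image_le_of_deriv_right_lt_deriv_boundary (f := E) (f' := E') (a := 0) (b := t)
      (hcont.mono Set.Icc_subset_Ici_self)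
      (fun x hx => (hderiv x hx.1).mono (Set.Ici_subset_Ici.2 hx.1))
      (B := fun x => E 0 + η / (t + 1) * x) (B' := fun _ => η / (t + 1))
      (by simp) hB
      (by
        intro x hx hEx
        have hx0 : x ∈ Set.Ici (0 : ℝ) := hx.1
        have hle : E x ≤ E 0 + η := by
          rw [hEx]
          have : η / (t + 1) * x ≤ η / (t + 1) * (t + 1) :=
            mul_le_mul_of_nonneg_left (by linarith [hx.2]) hs.le
          linarith
        have h1 : C * Real.sqrt (E x) ≤ κ :=
          (mul_le_mul_of_nonneg_left (Real.sqrt_le_sqrt hle) hC).trans hCη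
        have h2 := mul_le_mul_of_nonneg_right h1 (hDpos x hx0)
        have h3 := hineq x hx0
        show E' x < η / (t + 1)
        linarith)
    have h' := h (Set.right_mem_Icc.2 ht0)
    have : η / (t + 1) * t ≤ η / (t + 1) * (t + 1) :=
      mul_le_mul_of_nonneg_left (by linarith) hs.le
    linarith
  have hE0 : 0 ≤ E 0 := hEpos 0 (by simp)
  obtain ⟨η₀, hη₀, hsm⟩ : ∃ η₀ : ℝ, 0 < η₀ ∧ C * Real.sqrt (E 0 + η₀) ≤ κ := by
    have hc : Continuous (fun η : ℝ => C * Real.sqrt (E 0 + η)) := by fun_prop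
    have hev : ∀ᶠ η in nhds (0 : ℝ), C * Real.sqrt (E 0 + η) < κ :=
      hc.continuousAt.eventually_lt continuousAt_const (by simp only [add_zero]; linarith)
    obtain ⟨ε, hε, h⟩ := Metric.eventually_nhds_iff.1 hev
    refine ⟨ε / 2, by linarith, (h ?_).le⟩
    rw [Real.dist_eq, sub_zero, abs_of_pos (by linarith)]
    linarith
  have hbound : ∀ t ∈ Set.Ici (0 : ℝ), E t ≤ E 0 := by
    intro t ht
    by_contra! hlt
    have h1 : 0 < min η₀ ((E t - E 0) / 2) := lt_min hη₀ (by linarith)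
    have h2 := key t ht _ h1 ((mul_le_mul_of_nonneg_left
      (Real.sqrt_le_sqrt (by linarith [min_le_left η₀ ((E t - E 0) / 2)])) hC).trans hsm)
    linarith [min_le_right η₀ ((E t - E 0) / 2)]
  have hdiss : ∀ t ∈ Set.Ici (0 : ℝ), E' t + (κ / 2) * D t ≤ 0 := by
    intro t ht
    have h1 : C * Real.sqrt (E t) ≤ κ / 2 :=
      (mul_le_mul_of_nonneg_left (Real.sqrt_le_sqrt (hbound t ht)) hC).trans hsmall
    have h2 := mul_le_mul_of_nonneg_right h1 (hDpos t ht)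
    linarith [hineq t ht]
  refine ⟨?_, hdiss, hbound⟩
  refine antitoneOn_of_hasDerivWithinAt_nonpos (convex_Ici 0) hcont (f' := E')
    (fun x hx => (hderiv x (interior_subset hx)).mono interior_subset) ?_
  intro x hx
  have hx0 := interior_subset hx
  have := mul_nonneg (half_pos hκ).le (hDpos x hx0)
  linarith [hdiss x hx0]
end

section
/- Let κ > 0, c₀ > 0, C₁ ≥ 0 and C₂ ≥ 0. Let E : [0,∞) → ℝ be differentiable with E(t) ≥ 0 for all t and E(0) > 0, and let D : [0,∞) → ℝ satisfy D(t) ≥ c₀·E(t) for all t. Assume E'(t) + κ·D(t) ≤ C₁·E(t)^{3/2} + C₂·√(E(t))·D(t) for all t ≥ 0, together with the smallness conditions 2·C₂·√(E(0)) ≤ κ/2 and 2·C₁·√(E(0)) ≤ (κ·c₀)/4. Then E is nonincreasing on [0,∞); in particular E(t) ≤ E(0) ≤ 4·E(0) for all t ≥ 0. -/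
/-- Bootstrap/absorption for the second unidirectional model: under the smallness
conditions `2C₂√(E 0) ≤ κ/2` and `2C₁√(E 0) ≤ κc₀/4`, the energy satisfying
`E' + κD ≤ C₁ E^{3/2} + C₂ √E · D` with `D ≥ c₀ E` is nonincreasing, and in
particular `E(t) ≤ E(0) ≤ 4E(0)` for all `t ≥ 0`. -/
theorem cubic_absorption_global
    (κ c₀ C₁ C₂ : ℝ) (hκ : 0 < κ) (hc₀ : 0 < c₀) (hC₁ : 0 ≤ C₁) (hC₂ : 0 ≤ C₂)
    (E E' D : ℝ → ℝ)
    (hderiv : ∀ t ∈ Set.Ici (0 : ℝ), HasDerivWithinAt E (E' t) (Set.Ici 0) t)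
    (hEpos : ∀ t ∈ Set.Ici (0 : ℝ), 0 ≤ E t)
    (hE0 : 0 < E 0)
    (hDcoercive : ∀ t ∈ Set.Ici (0 : ℝ), c₀ * E t ≤ D t)
    (hineq : ∀ t ∈ Set.Ici (0 : ℝ),
      E' t + κ * D t ≤ C₁ * E t ^ ((3 : ℝ) / 2) + C₂ * Real.sqrt (E t) * D t)
    (hsmall₂ : 2 * C₂ * Real.sqrt (E 0) ≤ κ / 2)
    (hsmall₁ : 2 * C₁ * Real.sqrt (E 0) ≤ κ * c₀ / 4) :
    AntitoneOn E (Set.Ici 0) ∧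
    (∀ t ∈ Set.Ici (0 : ℝ), E t ≤ E 0) ∧
    (∀ t ∈ Set.Ici (0 : ℝ), E t ≤ 4 * E 0) := by
  have key : ∀ t ∈ Set.Ici (0 : ℝ), E t ≤ E 0 → E' t ≤ -(κ * c₀ / 4 * E t) := by
    intro t ht hle
    have h0 := hEpos t ht
    have hs : Real.sqrt (E t) ≤ Real.sqrt (E 0) := Real.sqrt_le_sqrt hle
    have hs0 := Real.sqrt_nonneg (E 0)
    have hD := hDcoercive t ht
    have hD0 : 0 ≤ D t := le_trans (by positivity) hD
    have hpow : E t ^ ((3 : ℝ) / 2) = Real.sqrt (E t) * E t := by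
      rw [show (3 : ℝ) / 2 = 1 / 2 + 1 by norm_num,
        Real.rpow_add_one' h0 (by norm_num), Real.sqrt_eq_rpow]
    have h := hineq t ht
    rw [hpow] at h
    have a1 : C₁ * Real.sqrt (E t) ≤ κ * c₀ / 4 := by
      nlinarith [mul_le_mul_of_nonneg_left hs hC₁, mul_nonneg hC₁ hs0]
    have a2 : C₂ * Real.sqrt (E t) ≤ κ / 2 := by
      nlinarith [mul_le_mul_of_nonneg_left hs hC₂, mul_nonneg hC₂ hs0]
    have b1 := mul_le_mul_of_nonneg_right a1 h0
    have b2 := mul_le_mul_of_nonneg_right a2 hD0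
    have b3 := mul_le_mul_of_nonneg_left hD hκ.le
    nlinarith
  have hcont : ContinuousOn E (Set.Ici 0) := fun t ht => (hderiv t ht).continuousWithinAt
  have bound : ∀ t ∈ Set.Ici (0 : ℝ), E t ≤ E 0 := by
    intro t ht
    refine image_le_of_deriv_right_lt_deriv_boundary' (f := E) (f' := E') (a := 0) (b := t)
      (B := fun _ => E 0) (B' := fun _ => 0) (hcont.mono Set.Icc_subset_Ici_self) ?_ le_rfl
      continuousOn_const (fun x _ => hasDerivWithinAt_const _ _ _) ?_ ⟨ht, le_rfl⟩
    · intro x hx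
      exact (hderiv x hx.1).mono (Set.Ici_subset_Ici.2 hx.1)
    · intro x hx hxe
      have h := key x hx.1 hxe.le
      rw [hxe] at h
      have : 0 < κ * c₀ / 4 * E 0 := by positivity
      linarith
  refine ⟨?_, bound, fun t ht => by linarith [bound t ht]⟩
  refine antitoneOn_of_hasDerivWithinAt_nonpos (f' := E') (convex_Ici 0) hcont ?_ ?_
  · intro x hx
    exact (hderiv x (interior_subset hx)).mono interior_subset
  · intro x hx
    have hx' := interior_subset hx
    have h := key x hx' (bound x hx')
    have h0 := hEpos x hx'
    have : 0 ≤ κ * c₀ / 4 * E x := by positivity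
    linarith
end
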